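/- arXiv:math/9502238 — 2 statements merged into one kernel-verified Lean document; each statement's English description precedes it below -/
import Mathlib

section
/- For all integers v, k, t with 1 ≤ t ≤ k ≤ v, the covering number satisfies C(v,k,t) ≥ L(v,k,t), where L(v,k,t) = ⌈(v/k)·⌈((v−1)/(k−1))·⋯·⌈(v−t+1)/(k−t+1)⌉⋯⌉⌉ is the iterated-ceiling Schönheim bound. -/
/-- A `(v,k,t)` covering design: a family of `k`-element subsets (blocks) of a
`v`-element set such that every `t`-element subset is contained in at least one block. -/
def IsCoverDesign (v k t : ℕ) (B : Finset (Finset (Fin v))) : Prop :=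
  (∀ b ∈ B, b.card = k) ∧
  ∀ s : Finset (Fin v), s.card = t → ∃ b ∈ B, s ⊆ b

/-- `coverNumber v k t` is `C(v,k,t)`, the minimum number of blocks in a
`(v,k,t)` covering design. -/
noncomputable def coverNumber (v k t : ℕ) : ℕ :=
  sInf {n : ℕ | ∃ B : Finset (Finset (Fin v)), IsCoverDesign v k t B ∧ B.card = n}

/-- The iterated-ceiling Schönheim bound
`L(v,k,t) = ⌈(v/k)·⌈((v−1)/(k−1))·⋯·⌈(v−t+1)/(k−t+1)⌉⋯⌉⌉`, with `L(v,k,0) = 1`. -/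
noncomputable def schonheimL : ℕ → ℕ → ℕ → ℕ
  | _, _, 0 => 1
  | v, k, t + 1 => ⌈((v : ℚ) / (k : ℚ)) * (schonheimL (v - 1) (k - 1) t : ℚ)⌉₊

/-!
Among the blocks of a covering, those through a fixed point `x`, with `x` deleted, cover the
`(t - 1)`-subsets of the remaining points. So every point lies on at least `L(v-1,k-1,t-1)` blocks,
and double counting the incidences between points and blocks gives `v · L(v-1,k-1,t-1) ≤ |B| · k`;
since `|B|` is an integer, the ceiling comes for free.
-/

/-- The family `B` covers the `t`-subsets of `S`. Members of `B` may stick out of `S` and have any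
size, and `S` is a finset rather than a type, so that a point can be deleted without changing the
ambient type. -/
def CoversSubsets {α : Type*} (S : Finset α) (t : ℕ) (B : Finset (Finset α)) : Prop :=
  ∀ s ⊆ S, s.card = t → ∃ b ∈ B, s ⊆ b

theorem IsCoverDesign.coversSubsets_univ {v k t : ℕ} {B : Finset (Finset (Fin v))}
    (hB : IsCoverDesign v k t B) : CoversSubsets Finset.univ t B :=
  fun s _ hs => hB.2 s hs

theorem isCoverDesign_powersetCard_univ {v k t : ℕ} (htk : t ≤ k) (hkv : k ≤ v) :
    IsCoverDesign v k t (Finset.univ.powersetCard k) := by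
  refine ⟨fun b hb => (Finset.mem_powersetCard.mp hb).2, fun s hs => ?_⟩
  obtain ⟨b, hsb, hb, hbk⟩ := Finset.exists_subsuperset_card_eq (Finset.subset_univ s)
    (hs.trans_le htk) (hkv.trans_eq (Finset.card_fin v).symm)
  exact ⟨b, Finset.mem_powersetCard.mpr ⟨hb, hbk⟩, hsb⟩

theorem exists_isCoverDesign_card_eq_coverNumber {v k t : ℕ} (htk : t ≤ k) (hkv : k ≤ v) :
    ∃ B, IsCoverDesign v k t B ∧ B.card = coverNumber v k t :=
  Nat.sInf_mem (s := {n | ∃ B, IsCoverDesign v k t B ∧ B.card = n})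
    ⟨_, _, isCoverDesign_powersetCard_univ htk hkv, rfl⟩

-- At `k = 0` the left-hand side is `0`, by the convention `v / 0 = 0`.
theorem schonheimL_succ_le {v k t n : ℕ} (h : v * schonheimL (v - 1) (k - 1) t ≤ n * k) :
    schonheimL v k (t + 1) ≤ n := by
  rw [schonheimL, Nat.ceil_le, div_mul_eq_mul_div]
  exact div_le_of_le_mul₀ k.cast_nonneg n.cast_nonneg (mod_cast h)

section SetFamily

variable {α : Type*} {S : Finset α} {B : Finset (Finset α)} {k t : ℕ}

theorem card_mul_le_card_mul_of_le_degree [DecidableEq α] {n : ℕ}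
    (hB : ∀ b ∈ B, b.card ≤ k) (hdeg : ∀ x ∈ S, n ≤ (B.filter (x ∈ ·)).card) :
    S.card * n ≤ B.card * k :=
  calc
    S.card * n ≤ ∑ b ∈ B, (S ∩ b).card := Finset.le_sum_card_inter hdeg
    _ ≤ B.card * k := Finset.sum_le_card_nsmul _ _ _ fun b hb =>
      (Finset.card_le_card Finset.inter_subset_right).trans (hB b hb)

theorem card_memberSubfamily_le_degree [DecidableEq α] (x : α) (B : Finset (Finset α)) :
    (B.memberSubfamily x).card ≤ (B.filter (x ∈ ·)).card :=
  Finset.card_image_le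

theorem card_le_pred_of_mem_memberSubfamily [DecidableEq α] {x : α}
    (hB : ∀ b ∈ B, b.card ≤ k) : ∀ b ∈ B.memberSubfamily x, b.card ≤ k - 1 := by
  intro b hb
  obtain ⟨hxbB, hxb⟩ := Finset.mem_memberSubfamily.mp hb
  have hcard : b.card + 1 ≤ k := by
    simpa only [Finset.card_insert_of_notMem hxb] using hB _ hxbB
  exact Nat.le_sub_one_of_lt hcard

namespace CoversSubsets

theorem memberSubfamily [DecidableEq α] {x : α} (hx : x ∈ S) (hB : CoversSubsets S (t + 1) B) :
    CoversSubsets (S.erase x) t (B.memberSubfamily x) := by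
  intro s hs hst
  obtain ⟨hsS, hxs⟩ := Finset.subset_erase.mp hs
  obtain ⟨b, hb, hsb⟩ := hB (insert x s) (Finset.insert_subset hx hsS)
    (by rw [Finset.card_insert_of_notMem hxs, hst])
  obtain ⟨hxb, hsb⟩ := Finset.insert_subset_iff.mp hsb
  refine ⟨b.erase x, Finset.mem_memberSubfamily.mpr ⟨?_, Finset.notMem_erase x b⟩,
    Finset.subset_erase.mpr ⟨hsb, hxs⟩⟩
  rwa [Finset.insert_erase hxb]

theorem schonheimL_le_card (hB : CoversSubsets S t B) (hcard : ∀ b ∈ B, b.card ≤ k) :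
    schonheimL S.card k t ≤ B.card := by
  classical
  induction t generalizing S B k with
  | zero =>
    obtain ⟨b, hb, -⟩ := hB ∅ S.empty_subset Finset.card_empty
    rw [schonheimL]
    exact Finset.card_pos.mpr ⟨b, hb⟩
  | succ t ih =>
    have hdeg : ∀ x ∈ S, schonheimL (S.card - 1) (k - 1) t ≤ (B.filter (x ∈ ·)).card := by
      intro x hx
      rw [← Finset.card_erase_of_mem hx]
      exact (ih (hB.memberSubfamily hx) (card_le_pred_of_mem_memberSubfamily hcard)).trans
        (card_memberSubfamily_le_degree x B)
    exact schonheimL_succ_le (card_mul_le_card_mul_of_le_degree hcard hdeg)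

end CoversSubsets

end SetFamily

/-- The Schönheim bound: `C(v,k,t) ≥ L(v,k,t)`. -/
theorem schonheim_bound (v k t : ℕ) (ht : 1 ≤ t) (htk : t ≤ k) (hkv : k ≤ v) :
    coverNumber v k t ≥ schonheimL v k t := by
  obtain ⟨B, hB, hcard⟩ := exists_isCoverDesign_card_eq_coverNumber htk hkv
  calc
    schonheimL v k t = schonheimL (Finset.univ : Finset (Fin v)).card k t := by
      rw [Finset.card_fin]
    _ ≤ B.card := hB.coversSubsets_univ.schonheimL_le_card fun b hb => (hB.1 b hb).le
    _ = coverNumber v k t := hcard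
end

section
/- For all integers v, k, t with 1 ≤ t ≤ k ≤ v, the covering number satisfies C(v−1, k−1, t−1) ≤ ⌊(k/v) · C(v,k,t)⌋: choosing an element of the v-set occurring in the fewest blocks of an optimal (v,k,t) covering, keeping only the blocks containing it, and deleting that element from them, yields a (v−1,k−1,t−1) covering of size at most ⌊k·C(v,k,t)/v⌋. -/
/-! Double counting incidences between points and blocks shows that the numbers of blocks through
the `v` points of an optimal covering `B` sum to `k * |B|`, so some point `x` lies on at most
`k * |B| / v` blocks. Every `(t - 1)`-set avoiding `x` becomes a `t`-set on adjoining `x`, and a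
block covering that `t`-set passes through `x`; hence the blocks through `x`, with `x` deleted,
cover all `(t - 1)`-sets of the other points. -/

open Finset

section Incidences

variable {α : Type*} [Fintype α] [DecidableEq α]

theorem sum_card_filter_mem_eq_sum_card (B : Finset (Finset α)) :
    ∑ x, #{b ∈ B | x ∈ b} = ∑ b ∈ B, #b := by
  simpa [bipartiteAbove, bipartiteBelow] using
    sum_card_bipartiteAbove_eq_sum_card_bipartiteBelow (s := univ) (t := B) (fun x b ↦ x ∈ b)

theorem exists_card_mul_card_filter_mem_le_sum_card [Nonempty α] (B : Finset (Finset α)) :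
    ∃ x, Fintype.card α * #{b ∈ B | x ∈ b} ≤ ∑ b ∈ B, #b := by
  have hsum : ∑ x, Fintype.card α * #{b ∈ B | x ∈ b} ≤ ∑ _x : α, ∑ b ∈ B, #b := by
    rw [← mul_sum, sum_card_filter_mem_eq_sum_card, sum_const, card_univ, smul_eq_mul]
  obtain ⟨x, -, hx⟩ := exists_le_of_sum_le univ_nonempty hsum
  exact ⟨x, hx⟩

end Incidences

section DerivedBlocks

variable {n : ℕ}

/-- The set `b \ {x}`, viewed as a subset of `Fin n` by identifying `Fin n` with the complement of
`x` through `x.succAbove`. -/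
def deletePoint (x : Fin (n + 1)) (b : Finset (Fin (n + 1))) : Finset (Fin n) :=
  {i | x.succAbove i ∈ b}

/-- The blocks of the derived design of `B` at the point `x`: those blocks of `B` that pass through
`x`, with `x` deleted. -/
def derivedBlocks (x : Fin (n + 1)) (B : Finset (Finset (Fin (n + 1)))) : Finset (Finset (Fin n)) :=
  {b ∈ B | x ∈ b}.image (deletePoint x)

theorem map_deletePoint (x : Fin (n + 1)) (b : Finset (Fin (n + 1))) :
    (deletePoint x b).map x.succAboveEmb = b.erase x := by
  ext y
  rcases Fin.eq_self_or_eq_succAbove x y with rfl | ⟨i, rfl⟩ <;> simp [deletePoint]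

theorem card_deletePoint (x : Fin (n + 1)) (b : Finset (Fin (n + 1))) :
    #(deletePoint x b) = #(b.erase x) := by
  rw [← map_deletePoint, card_map]

theorem subset_deletePoint_iff {x : Fin (n + 1)} {s : Finset (Fin n)} {b : Finset (Fin (n + 1))} :
    s ⊆ deletePoint x b ↔ s.map x.succAboveEmb ⊆ b := by
  rw [← map_subset_map (f := x.succAboveEmb), map_deletePoint, subset_erase]
  simp

theorem card_derivedBlocks_le (x : Fin (n + 1)) (B : Finset (Finset (Fin (n + 1)))) :
    #(derivedBlocks x B) ≤ #{b ∈ B | x ∈ b} :=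
  card_image_le

end DerivedBlocks

namespace IsCoverDesign

variable {v k t : ℕ}

theorem powersetCard_univ (htk : t ≤ k) (hkv : k ≤ v) :
    IsCoverDesign v k t (powersetCard k univ) := by
  refine ⟨fun b hb ↦ (mem_powersetCard.1 hb).2, fun s hs ↦ ?_⟩
  obtain ⟨b, hsb, hb, hbk⟩ :=
    exists_subsuperset_card_eq (subset_univ s) (hs.trans_le htk) (by simpa using hkv)
  exact ⟨b, mem_powersetCard.2 ⟨hb, hbk⟩, hsb⟩

theorem sum_card {B : Finset (Finset (Fin v))} (hB : IsCoverDesign v k t B) :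
    ∑ b ∈ B, #b = k * #B := by
  rw [sum_const_nat hB.1, mul_comm]

theorem derivedBlocks {B : Finset (Finset (Fin (v + 1)))}
    (hB : IsCoverDesign (v + 1) (k + 1) (t + 1) B) (x : Fin (v + 1)) :
    IsCoverDesign v k t (derivedBlocks x B) := by
  constructor
  · intro c hc
    obtain ⟨b, hb, rfl⟩ := mem_image.1 hc
    obtain ⟨hbB, hxb⟩ := mem_filter.1 hb
    rw [card_deletePoint, card_erase_of_mem hxb, hB.1 b hbB, Nat.add_sub_cancel]
  · intro s hs
    have hx : x ∉ s.map x.succAboveEmb := by simp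
    have hcard : #(insert x (s.map x.succAboveEmb)) = t + 1 := by
      rw [card_insert_of_notMem hx, card_map, hs]
    obtain ⟨b, hbB, hb⟩ := hB.2 _ hcard
    obtain ⟨hxb, hsb⟩ := insert_subset_iff.1 hb
    exact ⟨deletePoint x b, mem_image_of_mem _ (mem_filter.2 ⟨hbB, hxb⟩),
      subset_deletePoint_iff.2 hsb⟩

theorem coverNumber_le_card {B : Finset (Finset (Fin v))} (hB : IsCoverDesign v k t B) :
    coverNumber v k t ≤ #B :=
  Nat.sInf_le ⟨B, hB, rfl⟩

theorem exists_card_eq_coverNumber (htk : t ≤ k) (hkv : k ≤ v) :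
    ∃ B, IsCoverDesign v k t B ∧ #B = coverNumber v k t :=
  Nat.sInf_mem (s := {n | ∃ B, IsCoverDesign v k t B ∧ #B = n})
    ⟨_, _, powersetCard_univ htk hkv, rfl⟩

end IsCoverDesign

/-- `C(v−1,k−1,t−1) ≤ ⌊(k/v)·C(v,k,t)⌋` (Schönheim): keep only the blocks through an
element lying in the fewest blocks of an optimal `(v,k,t)` covering and delete that
element from them. -/
theorem cover_derive (v k t : ℕ) (ht : 1 ≤ t) (htk : t ≤ k) (hkv : k ≤ v) :
    coverNumber (v - 1) (k - 1) (t - 1) ≤ k * coverNumber v k t / v := by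
  obtain ⟨t, rfl⟩ := Nat.exists_eq_add_of_le' ht
  obtain ⟨k, rfl⟩ := Nat.exists_eq_add_of_le' (ht.trans htk)
  obtain ⟨v, rfl⟩ := Nat.exists_eq_add_of_le' ((ht.trans htk).trans hkv)
  simp only [Nat.add_sub_cancel]
  obtain ⟨B, hB, hBcard⟩ := IsCoverDesign.exists_card_eq_coverNumber htk hkv
  obtain ⟨x, hx⟩ := exists_card_mul_card_filter_mem_le_sum_card B
  rw [Fintype.card_fin, hB.sum_card, hBcard] at hx
  calc
    coverNumber v k t ≤ #(derivedBlocks x B) := (hB.derivedBlocks x).coverNumber_le_card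
    _ ≤ #{b ∈ B | x ∈ b} := card_derivedBlocks_le x B
    _ ≤ (k + 1) * coverNumber (v + 1) (k + 1) (t + 1) / (v + 1) :=
      (Nat.le_div_iff_mul_le v.succ_pos).2 (by rwa [mul_comm])
end
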